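/- arXiv:1407.3313 — 2 statements merged into one kernel-verified Lean document; each statement's English description precedes it below -/
import Mathlib

section
/- Let Ω ⊂ ℝ^n be a bounded open set, s ∈ (0,1), f ∈ L²(Ω), g ∈ L¹(ℝ^n\Ω). Define I : H^s_{Ω,g} → ℝ by I[u] := (c_{n,s}/4) ∫∫_{Q(Ω)} |u(x)−u(y)|²/|x−y|^{n+2s} dx dy − ∫_Ω f u dx − ∫_{ℝ^n\Ω} g u dx. Then I is well-defined and finite on H^s_{Ω,g}, for every u, v ∈ H^s_{Ω,g} the directional derivative lim_{ε→0} (I[u+εv]−I[u])/ε exists and equals (c_{n,s}/2) ∫∫_{Q(Ω)} (u(x)−u(y))(v(x)−v(y))/|x−y|^{n+2s} dx dy − ∫_Ω f v − ∫_{ℝ^n\Ω} g v, and consequently every critical point of I (a point where all these directional derivatives vanish) is a weak solution of (−Δ)^s u = f in Ω with N_s u = g in ℝ^n\closure(Ω). -/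
/-!
Expanding the square, `I[u + εv] = I[u] + ε L + ε² (c_{n,s}/4) [v]²`, where `L` is the asserted
derivative and `[v]²` is the Gagliardo energy of `v`; the difference quotient is therefore
`L + ε (c_{n,s}/4) [v]²`, which tends to `L`. The expansion may be integrated term by term because
every cross term is dominated by squares: `|f u| ≤ f² + u²` on `Ω`, `|g u| ≤ |g| + |g| u²` off `Ω`,
and `|(u(x) - u(y)) (v(x) - v(y))| ≤ (u(x) - u(y))² + (v(x) - v(y))²` under the nonnegative kernel.
A critical point in `H^s_{Ω,g}` lies in `H^s_{Ω,0}` since the latter drops the weighted condition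
off `Ω`, and vanishing of `L` is the weak formulation.
-/

open MeasureTheory Filter Set Bornology
open scoped Topology ENNReal NNReal Pointwise symmDiff

noncomputable section

/-- `ℝ^n` as a Euclidean space. -/
abbrev En (n : ℕ) := EuclideanSpace ℝ (Fin n)

/-- The normalization constant `c_{n,s}` of the fractional Laplacian. -/
def cns (n : ℕ) (s : ℝ) : ℝ :=
  4 ^ s * Real.Gamma ((n : ℝ) / 2 + s) / (Real.pi ^ ((n : ℝ) / 2) * |Real.Gamma (-s)|)

/-- `Q(Ω) = ℝ^{2n} \ (CΩ × CΩ)`. -/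
def Qset (n : ℕ) (Ω : Set (En n)) : Set (En n × En n) := (Ωᶜ ×ˢ Ωᶜ)ᶜ

/-- The kernel `|x-y|^{n+2s}`. -/
def nsKer (n : ℕ) (s : ℝ) (x y : En n) : ℝ := dist x y ^ ((n : ℝ) + 2 * s)

/-- The nonlocal normal derivative `N_s u (x) = c_{n,s} ∫_Ω (u x - u y)/|x-y|^{n+2s} dy`. -/
def NsD (n : ℕ) (s : ℝ) (Ω : Set (En n)) (u : En n → ℝ) (x : En n) : ℝ :=
  cns n s * ∫ y in Ω, (u x - u y) / nsKer n s x y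

/-- The renormalized nonlocal normal derivative `Ñ_s u`. -/
def NsTilde (n : ℕ) (s : ℝ) (Ω : Set (En n)) (u : En n → ℝ) (x : En n) : ℝ :=
  NsD n s Ω u x / (cns n s * ∫ y in Ω, (nsKer n s x y)⁻¹)

/-- The fractional Laplacian `(-Δ)^s u (x)`, defined as a principal value. -/
def fracLap (n : ℕ) (s : ℝ) (u : En n → ℝ) (x : En n) : ℝ :=
  cns n s * limUnder (𝓝[>] (0 : ℝ))
    (fun ε => ∫ y in {y : En n | ε ≤ dist x y}, (u x - u y) / nsKer n s x y)

/-- The Gagliardo-type bilinear form over `Q(Ω)`. -/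
def gagliardo2 (n : ℕ) (s : ℝ) (Ω : Set (En n)) (u v : En n → ℝ) : ℝ :=
  ∫ p in Qset n Ω, (u p.1 - u p.2) * (v p.1 - v p.2) / nsKer n s p.1 p.2

/-- Membership in the space `H^s_{Ω,g}`. -/
def InHs (n : ℕ) (s : ℝ) (Ω : Set (En n)) (g : En n → ℝ) (u : En n → ℝ) : Prop :=
  Measurable u ∧
  IntegrableOn (fun x => u x ^ 2) Ω ∧
  IntegrableOn (fun x => |g x| * u x ^ 2) Ωᶜ ∧
  IntegrableOn (fun p : En n × En n => (u p.1 - u p.2) ^ 2 / nsKer n s p.1 p.2) (Qset n Ω)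

/-- The squared norm of `H^s_{Ω,g}`. -/
def hsNormSq (n : ℕ) (s : ℝ) (Ω : Set (En n)) (g : En n → ℝ) (u : En n → ℝ) : ℝ :=
  (∫ x in Ω, u x ^ 2) + (∫ x in Ωᶜ, |g x| * u x ^ 2) + gagliardo2 n s Ω u u

/-- The scalar product of `H^s_{Ω,g}`. -/
def hsInner (n : ℕ) (s : ℝ) (Ω : Set (En n)) (g : En n → ℝ) (u v : En n → ℝ) : ℝ :=
  (∫ x in Ω, u x * v x) + (∫ x in Ωᶜ, |g x| * (u x * v x)) + gagliardo2 n s Ω u v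

/-- `u` is a weak solution of `(-Δ)^s u = f` in `Ω`, `N_s u = g` in `ℝ^n \ Ω̄`. -/
def IsWeakSol (n : ℕ) (s : ℝ) (Ω : Set (En n)) (f g : En n → ℝ) (u : En n → ℝ) : Prop :=
  InHs n s Ω (fun _ => 0) u ∧
  ∀ v : En n → ℝ, InHs n s Ω g v →
    cns n s / 2 * gagliardo2 n s Ω u v = (∫ x in Ω, f x * v x) + ∫ x in Ωᶜ, g x * v x

/-- Last coordinate of a point of `ℝ^n`. -/
def lastCoord {n : ℕ} (x : En n) : ℝ :=
  if h : 0 < n then x ⟨n - 1, Nat.sub_lt h Nat.one_pos⟩ else 0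

/-- The first `n-1` coordinates of a point of `ℝ^n`. -/
def frontCoords {n : ℕ} (x : En n) : EuclideanSpace ℝ (Fin (n - 1)) :=
  (WithLp.equiv 2 (Fin (n - 1) → ℝ)).symm fun i => x (Fin.castLE (Nat.sub_le n 1) i)

/-- A bounded Lipschitz domain: open, bounded, nonempty, and near each boundary point the
domain is (up to a rigid motion) the subgraph of a Lipschitz function. -/
def IsLipschitzDomain (n : ℕ) (Ω : Set (En n)) : Prop :=
  IsOpen Ω ∧ IsBounded Ω ∧ Ω.Nonempty ∧
  ∀ p ∈ frontier Ω, ∃ (φ : En n ≃ᵢ En n) (γ : EuclideanSpace ℝ (Fin (n - 1)) → ℝ)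
    (L : ℝ≥0) (r : ℝ), 0 < r ∧ LipschitzWith L γ ∧ φ p = 0 ∧
    (φ '' Ω) ∩ Metric.ball 0 r = {x : En n | lastCoord x < γ (frontCoords x)} ∩ Metric.ball 0 r

/-- A bounded domain with `C¹` boundary. -/
def IsC1Domain (n : ℕ) (Ω : Set (En n)) : Prop :=
  IsOpen Ω ∧ IsBounded Ω ∧ Ω.Nonempty ∧
  ∀ p ∈ frontier Ω, ∃ (φ : En n ≃ᵢ En n) (γ : EuclideanSpace ℝ (Fin (n - 1)) → ℝ)
    (r : ℝ), 0 < r ∧ ContDiff ℝ 1 γ ∧ φ p = 0 ∧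
    (φ '' Ω) ∩ Metric.ball 0 r = {x : En n | lastCoord x < γ (frontCoords x)} ∩ Metric.ball 0 r

/-- The Laplacian `Δu = ∑ ∂²u/∂xᵢ²`. -/
def lapl {n : ℕ} (u : En n → ℝ) (x : En n) : ℝ :=
  ∑ i : Fin n,
    fderiv ℝ (fun y => fderiv ℝ u y (EuclideanSpace.single i (1 : ℝ))) x
      (EuclideanSpace.single i (1 : ℝ))

/-- The surface measure `ω_{n-1}` of the unit sphere of `ℝ^n`. -/
def sphereSurf (n : ℕ) : ℝ := n * (volume (Metric.ball (0 : En n) 1)).toReal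

/-- The unit vector `e_n`. -/
def eLast (n : ℕ) : En n :=
  if h : 0 < n then EuclideanSpace.single (⟨n - 1, Nat.sub_lt h Nat.one_pos⟩ : Fin n) (1 : ℝ)
  else 0

/-- The halfspace `Π = {x_n < 0}`. -/
def halfSpaceNeg (n : ℕ) : Set (En n) := {x : En n | lastCoord x < 0}

end

lemma abs_mul_le_sq_add_sq (a b : ℝ) : |a * b| ≤ a ^ 2 + b ^ 2 := by
  rw [abs_le]
  constructor <;> nlinarith [sq_nonneg (a + b), sq_nonneg (a - b)]

lemma nsKer_nonneg (n : ℕ) (s : ℝ) (x y : En n) : 0 ≤ nsKer n s x y :=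
  Real.rpow_nonneg dist_nonneg _

lemma measurable_nsKer (n : ℕ) (s : ℝ) :
    Measurable (fun p : En n × En n => nsKer n s p.1 p.2) := by
  unfold nsKer
  exact (measurable_fst.dist measurable_snd).pow_const _

lemma InHs.integrableOn_f_mul {n : ℕ} {s : ℝ} {Ω : Set (En n)} {f g u : En n → ℝ}
    (hfm : Measurable f) (hf : IntegrableOn (fun x => f x ^ 2) Ω) (hu : InHs n s Ω g u) :
    IntegrableOn (fun x => f x * u x) Ω :=
  Integrable.mono' (hf.add hu.2.1) (hfm.mul hu.1).aestronglyMeasurable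
    (ae_of_all _ fun x => abs_mul_le_sq_add_sq (f x) (u x))

lemma InHs.integrableOn_g_mul {n : ℕ} {s : ℝ} {Ω : Set (En n)} {g u : En n → ℝ}
    (hgm : Measurable g) (hg : IntegrableOn g Ωᶜ) (hu : InHs n s Ω g u) :
    IntegrableOn (fun x => g x * u x) Ωᶜ := by
  refine Integrable.mono' (hg.abs.add hu.2.2.1) (hgm.mul hu.1).aestronglyMeasurable
    (ae_of_all _ fun x => ?_)
  have h : |u x| ≤ 1 + u x ^ 2 := by simpa using abs_mul_le_sq_add_sq 1 (u x)
  calc ‖g x * u x‖ = |g x| * |u x| := by rw [Real.norm_eq_abs, abs_mul]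
    _ ≤ |g x| * (1 + u x ^ 2) := by gcongr
    _ = |g x| + |g x| * u x ^ 2 := by ring

lemma InHs.integrableOn_gagliardo {n : ℕ} {s : ℝ} {Ω : Set (En n)} {g u v : En n → ℝ}
    (hu : InHs n s Ω g u) (hv : InHs n s Ω g v) :
    IntegrableOn (fun p : En n × En n =>
      (u p.1 - u p.2) * (v p.1 - v p.2) / nsKer n s p.1 p.2) (Qset n Ω) := by
  have hum := hu.1
  have hvm := hv.1
  have hk := measurable_nsKer n s
  refine Integrable.mono' (hu.2.2.2.add hv.2.2.2)
    (Measurable.aestronglyMeasurable (by fun_prop)) (ae_of_all _ fun p => ?_)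
  have h0 := nsKer_nonneg n s p.1 p.2
  rw [Real.norm_eq_abs, abs_div, abs_of_nonneg h0]
  simp only [Pi.add_apply]
  rw [← add_div]
  exact div_le_div_of_nonneg_right (abs_mul_le_sq_add_sq _ _) h0

lemma gagliardo2_add_smul {n : ℕ} {s : ℝ} {Ω : Set (En n)} {g u v : En n → ℝ}
    (hu : InHs n s Ω g u) (hv : InHs n s Ω g v) (ε : ℝ) :
    gagliardo2 n s Ω (fun x => u x + ε * v x) (fun x => u x + ε * v x) =
      gagliardo2 n s Ω u u + 2 * ε * gagliardo2 n s Ω u v + ε ^ 2 * gagliardo2 n s Ω v v := by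
  have huu := hu.integrableOn_gagliardo hu
  have huv := (hu.integrableOn_gagliardo hv).const_mul (2 * ε)
  have hvv := (hv.integrableOn_gagliardo hv).const_mul (ε ^ 2)
  unfold gagliardo2
  rw [← integral_const_mul, ← integral_const_mul, ← integral_add huu huv]
  refine Eq.trans ?_ (integral_add (huu.add huv) hvv)
  refine integral_congr_ae (ae_of_all _ fun p => ?_)
  simp only [Pi.add_apply]
  ring

lemma setIntegral_mul_add_smul {n : ℕ} {A : Set (En n)} {h u v : En n → ℝ}
    (hu : IntegrableOn (fun x => h x * u x) A) (hv : IntegrableOn (fun x => h x * v x) A)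
    (ε : ℝ) :
    ∫ x in A, h x * (u x + ε * v x) = (∫ x in A, h x * u x) + ε * ∫ x in A, h x * v x := by
  rw [← integral_const_mul, ← integral_add hu (hv.const_mul ε)]
  refine integral_congr_ae (ae_of_all _ fun x => ?_)
  simp only
  ring

-- STATEMENT 3
theorem energy_functional_critical_points (n : ℕ) (hn : 0 < n) (s : ℝ)
    (hs : s ∈ Set.Ioo (0 : ℝ) 1) (Ω : Set (En n)) (hΩo : IsOpen Ω) (hΩb : IsBounded Ω)
    (f g : En n → ℝ) (hfm : Measurable f) (hf : IntegrableOn (fun x => f x ^ 2) Ω)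
    (hgm : Measurable g) (hg : IntegrableOn g Ωᶜ)
    (I : (En n → ℝ) → ℝ)
    (hI : ∀ u : En n → ℝ, I u = cns n s / 4 * gagliardo2 n s Ω u u -
      (∫ x in Ω, f x * u x) - ∫ x in Ωᶜ, g x * u x) :
    -- I is well defined and finite on H^s_{Ω,g}
    (∀ u : En n → ℝ, InHs n s Ω g u →
      IntegrableOn (fun x => f x * u x) Ω ∧ IntegrableOn (fun x => g x * u x) Ωᶜ) ∧
    -- the directional derivative exists and has the asserted value
    (∀ u v : En n → ℝ, InHs n s Ω g u → InHs n s Ω g v →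
      Filter.Tendsto (fun ε : ℝ => (I (fun x => u x + ε * v x) - I u) / ε) (𝓝[≠] (0 : ℝ))
        (𝓝 (cns n s / 2 * gagliardo2 n s Ω u v -
          (∫ x in Ω, f x * v x) - ∫ x in Ωᶜ, g x * v x))) ∧
    -- every critical point of I is a weak solution
    (∀ u : En n → ℝ, InHs n s Ω g u →
      (∀ v : En n → ℝ, InHs n s Ω g v →
        cns n s / 2 * gagliardo2 n s Ω u v -
          (∫ x in Ω, f x * v x) - (∫ x in Ωᶜ, g x * v x) = 0) →
      IsWeakSol n s Ω f g u) := by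
  refine ⟨fun u hu => ⟨hu.integrableOn_f_mul hfm hf, hu.integrableOn_g_mul hgm hg⟩, ?_, ?_⟩
  · intro u v hu hv
    set L := cns n s / 2 * gagliardo2 n s Ω u v -
      (∫ x in Ω, f x * v x) - ∫ x in Ωᶜ, g x * v x with hL
    have key : ∀ ε : ℝ, ε ≠ 0 → L + ε * (cns n s / 4 * gagliardo2 n s Ω v v) =
        (I (fun x => u x + ε * v x) - I u) / ε := by
      intro ε hε
      rw [hI, hI, gagliardo2_add_smul hu hv,
        setIntegral_mul_add_smul (hu.integrableOn_f_mul hfm hf) (hv.integrableOn_f_mul hfm hf),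
        setIntegral_mul_add_smul (hu.integrableOn_g_mul hgm hg) (hv.integrableOn_g_mul hgm hg),
        eq_div_iff hε, hL]
      ring
    have hlim : Tendsto (fun ε : ℝ => L + ε * (cns n s / 4 * gagliardo2 n s Ω v v))
        (𝓝 0) (𝓝 L) := by
      have hc : Continuous (fun ε : ℝ => L + ε * (cns n s / 4 * gagliardo2 n s Ω v v)) := by
        fun_prop
      simpa using hc.tendsto 0
    refine (hlim.mono_left nhdsWithin_le_nhds).congr' ?_
    filter_upwards [self_mem_nhdsWithin] with ε hε using key ε hε
  · intro u hu hcrit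
    refine ⟨⟨hu.1, hu.2.1, by simp, hu.2.2.2⟩, fun v hv => ?_⟩
    linarith [hcrit v hv]
end

section
/- Let Ω ⊂ ℝ^n be a bounded open set, s ∈ (0,1), f ∈ L²(Ω) with f ≥ 0, and g ∈ L¹(ℝ^n\Ω) with g ≥ 0. If u ∈ H^s_{Ω,0} is a weak solution of (−Δ)^s u = f in Ω with N_s u = g in ℝ^n\closure(Ω), then u is constant almost everywhere in ℝ^n (and f = 0 a.e. in Ω, g = 0 a.e. in ℝ^n\Ω). -/
/-!
Testing the weak formulation with `v = 1` kills the Gagliardo form and gives `∫_Ω f + ∫_{CΩ} g = 0`;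
as `f, g ≥ 0`, both vanish almost everywhere. Hence `u` itself is an admissible test function and
testing with it gives `∫∫_{Q(Ω)} |u(x) - u(y)|² / |x - y|^{n+2s} = 0` because `c_{n,s} ≠ 0`
(`cns_ne_zero`). So `u(x) = u(y)` for almost every `(x, y) ∈ Ω × ℝ^n`, and, `Ω` being of positive
measure, Fubini provides one `x ∈ Ω` with `u = u(x)` almost everywhere
(`ae_const_of_gagliardo2_self_eq_zero`).
-/

open MeasureTheory Filter Set Bornology
open scoped Topology ENNReal NNReal Pointwise symmDiff

lemma cns_ne_zero (n : ℕ) (s : ℝ) (hs : s ∈ Set.Ioo (0 : ℝ) 1) : cns n s ≠ 0 := by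
  have hs0 := hs.1
  have hs1 := hs.2
  have h1 : Real.Gamma (-s) ≠ 0 := by
    apply Real.Gamma_ne_zero
    intro m hm
    have hm' : s = m := by linarith
    rw [hm'] at hs0 hs1
    have h0 : 0 < m := by exact_mod_cast hs0
    have h2 : m < 1 := by exact_mod_cast hs1
    omega
  have h2 : 0 < Real.Gamma ((n : ℝ) / 2 + s) := Real.Gamma_pos_of_pos (by positivity)
  have h3 : 0 < |Real.Gamma (-s)| := abs_pos.mpr h1
  have h4 : 0 < Real.pi := Real.pi_pos
  unfold cns
  positivity

lemma measurableSet_Qset (n : ℕ) {Ω : Set (En n)} (hΩ : MeasurableSet Ω) :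
    MeasurableSet (Qset n Ω) :=
  (hΩ.compl.prod hΩ.compl).compl

lemma ae_const_of_gagliardo2_self_eq_zero (n : ℕ) (s : ℝ) {Ω : Set (En n)} (hΩo : IsOpen Ω)
    (hΩne : Ω.Nonempty) {u : En n → ℝ}
    (hint : IntegrableOn (fun p : En n × En n => (u p.1 - u p.2) ^ 2 / nsKer n s p.1 p.2)
      (Qset n Ω))
    (h0 : gagliardo2 n s Ω u u = 0) : ∃ c : ℝ, u =ᵐ[volume] fun _ => c := by
  have h1 : ∫ p in Qset n Ω, (u p.1 - u p.2) ^ 2 / nsKer n s p.1 p.2 = 0 := by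
    simpa only [gagliardo2, ← sq] using h0
  have hnn : 0 ≤ fun p : En n × En n => (u p.1 - u p.2) ^ 2 / nsKer n s p.1 p.2 := by
    intro p
    have hk := nsKer_nonneg n s p.1 p.2
    change 0 ≤ (u p.1 - u p.2) ^ 2 / nsKer n s p.1 p.2
    positivity
  have h2 : ∀ᵐ p ∂(volume.restrict (Qset n Ω)),
      (u p.1 - u p.2) ^ 2 / nsKer n s p.1 p.2 = 0 :=
    (integral_eq_zero_iff_of_nonneg hnn hint).1 h1
  rw [ae_restrict_iff' (measurableSet_Qset n hΩo.measurableSet)] at h2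
  have h3 : ∀ᵐ p : En n × En n ∂volume, p.1 ∈ Ω → u p.1 = u p.2 := by
    filter_upwards [h2] with p hp hpΩ
    have hpQ : p ∈ Qset n Ω := by
      simp [Qset, hpΩ]
    rcases div_eq_zero_iff.1 (hp hpQ) with h | h
    · exact sub_eq_zero.1 (pow_eq_zero_iff two_ne_zero |>.1 h)
    · -- The quotient by a vanishing kernel carries no information, but then `x = y`.
      unfold nsKer at h
      have hd : dist p.1 p.2 = 0 := ((Real.rpow_eq_zero_iff_of_nonneg dist_nonneg).1 h).1
      rw [dist_eq_zero.1 hd]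
  have h4 : ∀ᵐ x : En n ∂volume, ∀ᵐ y : En n ∂volume, x ∈ Ω → u x = u y :=
    Measure.ae_ae_of_ae_prod h3
  obtain ⟨x, hx⟩ : ∃ x, x ∈ Ω ∧ ∀ᵐ y : En n ∂volume, x ∈ Ω → u x = u y := by
    by_contra hcon
    refine (hΩo.measure_pos volume hΩne).ne' (measure_mono_null ?_ h4)
    exact fun x hxΩ hx => hcon ⟨x, hxΩ, hx⟩
  exact ⟨u x, hx.2.mono fun y hy => (hy hx.1).symm⟩

theorem nonlocal_maximum_principle (n : ℕ) (hn : 0 < n) (s : ℝ) (hs : s ∈ Set.Ioo (0 : ℝ) 1)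
    (Ω : Set (En n)) (hΩo : IsOpen Ω) (hΩb : IsBounded Ω) (hΩne : Ω.Nonempty)
    (f g : En n → ℝ) (hfm : Measurable f) (hf : IntegrableOn (fun x => f x ^ 2) Ω)
    (hfpos : ∀ᵐ x ∂volume.restrict Ω, 0 ≤ f x)
    (hgm : Measurable g) (hg : IntegrableOn g Ωᶜ)
    (hgpos : ∀ᵐ x ∂volume.restrict Ωᶜ, 0 ≤ g x)
    (u : En n → ℝ) (hu : IsWeakSol n s Ω f g u) :
    (∃ c : ℝ, u =ᵐ[volume] fun _ => c) ∧
    (f =ᵐ[volume.restrict Ω] fun _ => (0 : ℝ)) ∧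
    (g =ᵐ[volume.restrict Ωᶜ] fun _ => (0 : ℝ)) := by
  have hfin : volume Ω < ⊤ := hΩb.measure_lt_top
  have : IsFiniteMeasure (volume.restrict Ω) := ⟨by simpa using hfin⟩
  obtain ⟨⟨hum, hu2, -, huQ⟩, hweak⟩ := hu
  have hfi : IntegrableOn f Ω :=
    ((memLp_two_iff_integrable_sq hfm.aestronglyMeasurable).2 hf).integrable one_le_two
  have hone : InHs n s Ω g (fun _ => 1) := by
    refine ⟨measurable_const, ?_, ?_, ?_⟩
    · simp [hfin]
    · simp only [one_pow, mul_one]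
      exact hg.abs
    · simp
  have hsum : (∫ x in Ω, f x) + ∫ x in Ωᶜ, g x = 0 := by
    have h := hweak _ hone
    simp only [gagliardo2, sub_self, mul_zero, zero_div, integral_zero, mul_one] at h
    exact h.symm
  have hf0 : 0 ≤ ∫ x in Ω, f x := integral_nonneg_of_ae hfpos
  have hg0 : 0 ≤ ∫ x in Ωᶜ, g x := integral_nonneg_of_ae hgpos
  have hfz : f =ᵐ[volume.restrict Ω] fun _ => (0 : ℝ) :=
    (integral_eq_zero_iff_of_nonneg_ae hfpos hfi).1 (by linarith)
  have hgz : g =ᵐ[volume.restrict Ωᶜ] fun _ => (0 : ℝ) :=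
    (integral_eq_zero_iff_of_nonneg_ae hgpos hg).1 (by linarith)
  have hug : InHs n s Ω g u := by
    refine ⟨hum, hu2, ?_, huQ⟩
    refine (integrable_zero _ _ _).congr ?_
    filter_upwards [hgz] with x hx
    simp [hx]
  have htest := hweak u hug
  have hfu : ∫ x in Ω, f x * u x = 0 := by
    refine integral_eq_zero_of_ae ?_
    filter_upwards [hfz] with x hx
    simp [hx]
  have hgu : ∫ x in Ωᶜ, g x * u x = 0 := by
    refine integral_eq_zero_of_ae ?_
    filter_upwards [hgz] with x hx
    simp [hx]
  rw [hfu, hgu, add_zero] at htest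
  have hG : gagliardo2 n s Ω u u = 0 :=
    (mul_eq_zero.1 htest).resolve_left (div_ne_zero (cns_ne_zero n s hs) two_ne_zero)
  exact ⟨ae_const_of_gagliardo2_self_eq_zero n s hΩo hΩne huQ hG, hfz, hgz⟩
end
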